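/- Let a ∈ (−1, 0) and let x : ℝ → ℝ be continuous with x(s) − x(t) = a ∫_t^s x(u−1) du for all real t ≤ s. If limsup_{v→−∞} |x(v)| < ∞, then x is identically zero; equivalently, every solution of dx_s = a x_{s−1} ds on all of ℝ that is not identically zero satisfies limsup_{v→−∞} |x(v)| = +∞. -/

import Mathlib

/-!
Write `b = -a ∈ (0, 1)`, so that `x' s = -b * x (s - 1)`. If `|x| ≤ M` on `(-∞, T]`, then in fact
`|x| ≤ b * M` there; iterating, `|x| ≤ b ^ n * M` for every `n`, hence `x = 0` on `(-∞, T]`.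

For the contraction (`DelayEq.le_of_abs_le`), suppose `x s > 0`. If `x` has no zero before `s`, then
`x` is positive on `(-∞, s]`, hence decreasing there, hence `x' ≤ -b * x s`, and `x` is unbounded at
`-∞`, a contradiction. Otherwise let `z` be the last zero before `s`. As `|x'| ≤ b * M`, we have
`x ≤ b * M` on `[z, z + 1]`; and if `s > z + 1`, then `x` is decreasing on `[z + 1, s]` because it is
positive on `(z, s]`, so `x s ≤ x (z + 1) ≤ b * M`. The same bound for `-x` gives the claim.
-/

open MeasureTheory Set Filter

namespace DelayEq

theorem pos_of_forall_ne_zero {x : ℝ → ℝ} (hx : Continuous x) {u s : ℝ} (hus : u ≤ s)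
    (hs : 0 < x s) (h : ∀ v ∈ Icc u s, x v ≠ 0) : 0 < x u := by
  by_contra! hu
  obtain ⟨v, hv, hv0⟩ := intermediate_value_Icc hus hx.continuousOn ⟨hu, hs.le⟩
  exact h v hv hv0

/-- The one-sided contraction estimate: a bound `M` for `|x|` on `(-∞, s]` improves to the upper
bound `-a * M` for `x s`. -/
theorem le_of_abs_le {a : ℝ} (ha : a < 0) {x : ℝ → ℝ} (hx : Continuous x)
    (heq : ∀ t s : ℝ, t ≤ s → x s - x t = a * ∫ u in t..s, x (u - 1))
    {M s : ℝ} (hM : ∀ v ≤ s, |x v| ≤ M) : x s ≤ -a * M := by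
  have hM0 : 0 ≤ M := (abs_nonneg _).trans (hM s le_rfl)
  have haM : 0 ≤ -a * M := mul_nonneg (by linarith) hM0
  rcases le_or_gt (x s) 0 with hs | hs
  · linarith
  have hdec : ∀ t r : ℝ, t ≤ r → (∀ u ∈ Icc t r, 0 ≤ x (u - 1)) → x r ≤ x t := by
    intro t r htr h
    have h1 := heq t r htr
    have h2 := intervalIntegral.integral_nonneg (μ := volume) htr h
    nlinarith
  by_cases hz : ∃ z ≤ s, x z = 0
  · obtain ⟨z₀, hz₀s, hz₀⟩ := hz
    -- `z` is the last zero of `x` in `[z₀, s]`.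
    obtain ⟨z, ⟨⟨hz₀z, hzs⟩, hz0⟩, hzmax⟩ :=
      (isCompact_Icc.inter_right (isClosed_singleton.preimage hx) :
        IsCompact (Icc z₀ s ∩ x ⁻¹' {0})).exists_isGreatest ⟨z₀, ⟨le_rfl, hz₀s⟩, hz₀⟩
    have hz0 : x z = 0 := hz0
    have hpos : ∀ u, z < u → u ≤ s → 0 < x u := by
      intro u hzu hus
      refine pos_of_forall_ne_zero hx hus hs fun v hv hv0 => ?_
      have := hzmax ⟨⟨hz₀z.trans (hzu.le.trans hv.1), hv.2⟩, hv0⟩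
      linarith [hv.1]
    have hstep : ∀ r, z ≤ r → r ≤ z + 1 → r ≤ s → x r ≤ -a * M := by
      intro r hzr hr hrs
      have h1 := heq z r hzr
      have h2 : ‖∫ u in z..r, x (u - 1)‖ ≤ M * |r - z| := by
        refine intervalIntegral.norm_integral_le_of_norm_le_const fun u hu => ?_
        rw [uIoc_of_le hzr] at hu
        exact hM _ (by linarith [hu.2])
      rw [Real.norm_eq_abs, abs_of_nonneg (sub_nonneg.2 hzr)] at h2
      have h3 : M * (r - z) ≤ M := mul_le_of_le_one_right hM0 (by linarith)
      have h4 := (abs_le.1 (h2.trans h3)).1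
      nlinarith
    rcases le_or_gt s (z + 1) with hsz | hsz
    · exact hstep s hzs hsz le_rfl
    · refine (hdec (z + 1) s hsz.le fun u hu => ?_).trans
        (hstep (z + 1) (by linarith) le_rfl hsz.le)
      rcases eq_or_lt_of_le hu.1 with h | h
      · rw [← h, add_sub_cancel_right, hz0]
      · exact (hpos _ (by linarith) (by linarith [hu.2])).le
  · exfalso
    push Not at hz
    have hpos : ∀ u ≤ s, 0 < x u := fun u hu =>
      pos_of_forall_ne_zero hx hu hs fun v hv => hz v hv.2
    have hanti : ∀ u ≤ s, x s ≤ x u := fun u hu =>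
      hdec u s hu fun v hv => (hpos _ (by linarith [hv.2])).le
    -- At distance `k` to the left of `s` linear growth gives `x ≥ x s + (-a) * k * x s > M`.
    set k := M / (-a * x s) with hk
    have hax : 0 < -a * x s := mul_pos (by linarith) hs
    have hk0 : 0 ≤ k := div_nonneg hM0 hax.le
    have hkM : k * (-a * x s) = M := div_mul_cancel₀ _ hax.ne'
    have h1 := heq (s - k) s (by linarith)
    have h2 : ∫ _ in (s - k)..s, x s ≤ ∫ u in (s - k)..s, x (u - 1) := by
      refine intervalIntegral.integral_mono_on (by linarith) intervalIntegrable_const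
        ((hx.comp (continuous_id.sub continuous_const)).intervalIntegrable _ _) fun u hu => ?_
      exact hanti _ (by linarith [hu.2])
    rw [intervalIntegral.integral_const, smul_eq_mul, sub_sub_cancel] at h2
    have h3 := (abs_le.1 (hM (s - k) (by linarith))).2
    have h4 := mul_le_mul_of_nonneg_left h2 (neg_nonneg.2 ha.le)
    nlinarith

theorem abs_le_of_abs_le {a : ℝ} (ha : a < 0) {x : ℝ → ℝ} (hx : Continuous x)
    (heq : ∀ t s : ℝ, t ≤ s → x s - x t = a * ∫ u in t..s, x (u - 1))
    {M s : ℝ} (hM : ∀ v ≤ s, |x v| ≤ M) : |x s| ≤ -a * M := by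
  refine abs_le'.2 ⟨le_of_abs_le ha hx heq hM, ?_⟩
  refine le_of_abs_le (x := fun v => -x v) ha hx.neg (fun t s hts => ?_) (by simpa using hM)
  rw [intervalIntegral.integral_neg]
  linarith [heq t s hts]

end DelayEq

theorem stmt_3 (a : ℝ) (ha : a ∈ Set.Ioo (-1 : ℝ) 0) (x : ℝ → ℝ) (hx : Continuous x)
    (heq : ∀ t s : ℝ, t ≤ s → x s - x t = a * ∫ u in t..s, x (u - 1))
    (hbdd : ∃ M : ℝ, ∀ᶠ v in Filter.atBot, |x v| ≤ M) :
    ∀ s : ℝ, x s = 0 := by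
  intro s
  obtain ⟨M, hM⟩ := hbdd
  obtain ⟨T, hT⟩ := eventually_atBot.1 hM
  -- Continuity extends the bound near `-∞` to all of `(-∞, s]`.
  obtain ⟨C, hC⟩ := (isCompact_Icc (a := T) (b := s)).exists_bound_of_continuousOn hx.continuousOn
  have hiter : ∀ n : ℕ, ∀ v ≤ s, |x v| ≤ (-a) ^ n * max M C := by
    intro n
    induction n with
    | zero =>
      intro v hv
      rw [pow_zero, one_mul]
      rcases le_total v T with h | h
      · exact (hT v h).trans (le_max_left _ _)
      · exact (hC v ⟨h, hv⟩).trans (le_max_right _ _)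
    | succ n ih =>
      intro v hv
      rw [pow_succ', mul_assoc]
      exact DelayEq.abs_le_of_abs_le ha.2 hx heq fun w hw => ih w (hw.trans hv)
  have hlim : Tendsto (fun n : ℕ => (-a) ^ n * max M C) atTop (nhds 0) := by
    simpa using (tendsto_pow_atTop_nhds_zero_of_lt_one (r := -a) (by linarith [ha.2])
      (by linarith [ha.1])).mul_const (max M C)
  exact abs_nonpos_iff.1 (ge_of_tendsto' hlim fun n => hiter n s le_rfl)
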